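/- arXiv:1906.11369 — 6 statements merged into one kernel-verified Lean document; each statement's English description precedes it below -/
import Mathlib

section
/- Let P and P' be symmetric real n×n matrices, α₁, α₂ reals with 0 < α₁ ≤ α₂ and α₁ I ⪯ P ⪯ α₂ I and α₁ I ⪯ P' ⪯ α₂ I (Loewner order), let N ≥ 1 be a natural number and λ > 0 satisfy λ < (α₁/α₂)^{2/N}. If x, x' ∈ ℝⁿ satisfy x'ᵀ P' x' ≤ λ^N · xᵀ P' x and x ≠ 0, then x'ᵀ P x' < xᵀ P x. -/
open Matrix

/-! Both quadratic forms are comparable to `y ⬝ᵥ y`, so each passage between `P` and `P'` costs at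
most a factor `α₂ / α₁`. Two passages are needed, one at `x'` and one at `x`, and the contraction
`lam ^ N < (α₁ / α₂) ^ 2` pays for both. -/

theorem lt_of_le_mul_of_comparable {R : Type*} [CommSemiring R] [LinearOrder R]
    [IsStrictOrderedRing R] {a₁ a₂ b₁ b₂ c s s' v v' w w' : R} (ha₂ : 0 ≤ a₂) (hb₁ : 0 < b₁)
    (hc : 0 ≤ c) (hs : 0 < s) (hgap : c * (a₂ * b₂) < a₁ * b₁)
    (hv : a₁ * s ≤ v) (hv' : v' ≤ a₂ * s') (hw : w ≤ b₂ * s) (hw' : b₁ * s' ≤ w')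
    (hdecr : w' ≤ c * w) : v' < v := by
  refine lt_of_mul_lt_mul_left ?_ hb₁.le
  calc
    b₁ * v' ≤ b₁ * (a₂ * s') := by gcongr
    _ = a₂ * (b₁ * s') := by ring
    _ ≤ a₂ * w' := by gcongr
    _ ≤ a₂ * (c * w) := by gcongr
    _ ≤ a₂ * (c * (b₂ * s)) := by gcongr
    _ = c * (a₂ * b₂) * s := by ring
    _ < a₁ * b₁ * s := by gcongr
    _ = b₁ * (a₁ * s) := by ring
    _ ≤ b₁ * v := by gcongr

theorem pow_lt_rpow_of_lt_rpow_div {a b r : ℝ} {n : ℕ} (hn : n ≠ 0) (ha : 0 ≤ a) (hb : 0 ≤ b)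
    (h : a < b ^ (r / n)) : a ^ n < b ^ r :=
  calc
    a ^ n < (b ^ (r / n)) ^ n := pow_lt_pow_left₀ h ha hn
    _ = b ^ r := by rw [← Real.rpow_mul_natCast hb, div_mul_cancel₀ r (Nat.cast_ne_zero.mpr hn)]

section QuadraticForm

variable {ι R : Type*} [Fintype ι] [PartialOrder R]

theorem star_dotProduct_mulVec_le_of_posSemidef_sub [Ring R] [StarRing R] [IsOrderedAddMonoid R]
    {A B : Matrix ι ι R} (h : (B - A).PosSemidef) (y : ι → R) :
    star y ⬝ᵥ A *ᵥ y ≤ star y ⬝ᵥ B *ᵥ y := by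
  simpa only [sub_mulVec, dotProduct_sub, sub_nonneg] using h.dotProduct_mulVec_nonneg y

theorem star_dotProduct_mulVec_mem_Icc [DecidableEq ι] [CommRing R] [StarRing R]
    [IsOrderedAddMonoid R] {a b : R} {A : Matrix ι ι R}
    (hlo : (A - a • (1 : Matrix ι ι R)).PosSemidef) (hhi : (b • (1 : Matrix ι ι R) - A).PosSemidef)
    (y : ι → R) :
    star y ⬝ᵥ A *ᵥ y ∈ Set.Icc (a * (star y ⬝ᵥ y)) (b * (star y ⬝ᵥ y)) := by
  have smul_one_form (c : R) :
      star y ⬝ᵥ (c • (1 : Matrix ι ι R)) *ᵥ y = c * (star y ⬝ᵥ y) := by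
    rw [smul_mulVec, one_mulVec, dotProduct_smul, smul_eq_mul]
  exact ⟨smul_one_form a ▸ star_dotProduct_mulVec_le_of_posSemidef_sub hlo y,
    smul_one_form b ▸ star_dotProduct_mulVec_le_of_posSemidef_sub hhi y⟩

end QuadraticForm

theorem cross_lyapunov_decrease_general {X : Type*} {V V' s : X → ℝ} {α₁ α₂ : ℝ} (hα₁ : 0 < α₁)
    (hV : ∀ y, V y ∈ Set.Icc (α₁ * s y) (α₂ * s y))
    (hV' : ∀ y, V' y ∈ Set.Icc (α₁ * s y) (α₂ * s y))
    {N : ℕ} (hN : N ≠ 0) {lam : ℝ} (hlam : 0 ≤ lam) (hlt : lam < (α₁ / α₂) ^ ((2 : ℝ) / N))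
    {x x' : X} (hdecr : V' x' ≤ lam ^ N * V' x) (hx : 0 < s x) : V x' < V x := by
  have hα : α₁ ≤ α₂ := le_of_mul_le_mul_right ((hV x).1.trans (hV x).2) hx
  have hα₂ : 0 < α₂ := hα₁.trans_le hα
  have hpow : lam ^ N < (α₁ / α₂) ^ 2 := by
    simpa only [Real.rpow_two] using
      pow_lt_rpow_of_lt_rpow_div hN hlam (div_nonneg hα₁.le hα₂.le) hlt
  have hgap : lam ^ N * (α₂ * α₂) < α₁ * α₁ := by
    rwa [div_pow, lt_div_iff₀ (pow_pos hα₂ 2), sq, sq] at hpow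
  exact lt_of_le_mul_of_comparable hα₂.le hα₁ (pow_nonneg hlam N) hx hgap
    (hV x).1 (hV x').2 (hV' x).2 (hV' x').1 hdecr

/-- Under the conditioning bounds `α₁ I ⪯ P, P' ⪯ α₂ I` with `0 < α₁ ≤ α₂`,
`N ≥ 1`, and `0 < λ < (α₁/α₂)^(2/N)`, if `x'ᵀ P' x' ≤ λ^N · xᵀ P' x` and `x ≠ 0`,
then `x'ᵀ P x' < xᵀ P x`. -/
theorem cross_lyapunov_decrease {n : ℕ}
    (P P' : Matrix (Fin n) (Fin n) ℝ)
    (hPsym : P.IsHermitian) (hP'sym : P'.IsHermitian)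
    (α₁ α₂ : ℝ) (hα₁ : 0 < α₁) (hα : α₁ ≤ α₂)
    (hPlo : (P - α₁ • (1 : Matrix (Fin n) (Fin n) ℝ)).PosSemidef)
    (hPhi : (α₂ • (1 : Matrix (Fin n) (Fin n) ℝ) - P).PosSemidef)
    (hP'lo : (P' - α₁ • (1 : Matrix (Fin n) (Fin n) ℝ)).PosSemidef)
    (hP'hi : (α₂ • (1 : Matrix (Fin n) (Fin n) ℝ) - P').PosSemidef)
    (N : ℕ) (hN : 1 ≤ N)
    (lam : ℝ) (hlam : 0 < lam) (hlt : lam < (α₁ / α₂) ^ ((2 : ℝ) / (N : ℝ)))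
    (x x' : Fin n → ℝ)
    (hdecr : x' ⬝ᵥ P'.mulVec x' ≤ lam ^ N * (x ⬝ᵥ P'.mulVec x))
    (hx : x ≠ 0) :
    x' ⬝ᵥ P.mulVec x' < x ⬝ᵥ P.mulVec x := by
  -- `star` is definitionally the identity on `Fin n → ℝ`.
  exact cross_lyapunov_decrease_general hα₁ (star_dotProduct_mulVec_mem_Icc hPlo hPhi)
    (star_dotProduct_mulVec_mem_Icc hP'lo hP'hi) (Nat.one_le_iff_ne_zero.mp hN) hlam.le hlt hdecr
    (dotProduct_star_self_pos_iff.mpr hx)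
end

section
/- (Theorem 1(i), constraint satisfaction.) Let A ∈ ℝ^{n×n}, B ∈ ℝ^{n×m}, let 0 < λ ≤ 1, and let c_1,…,c_r ∈ ℝⁿ, d_1,…,d_r ∈ ℝ^m define the constraints c_kᵀ x + d_kᵀ u ≤ 1. Let (t_i)_{i∈ℕ} be a strictly increasing sequence of natural numbers with t_0 = 0, and for each cycle i ∈ ℕ let K_i ∈ ℝ^{m×n}, let P_i be a symmetric positive definite n×n matrix, and ρ_i > 0 a real number. Let (x_t) satisfy x_{t+1} = (A + B K_i) x_t for all t with t_i ≤ t < t_{i+1}. Assume for every i: (a) (A + B K_i)ᵀ P_i (A + B K_i) ⪯ λ P_i; (b) x_{t_i}ᵀ P_i x_{t_i} ≤ ρ_i; (c) for every k ∈ {1,…,r}, ρ_i · (c_k + K_iᵀ d_k)(c_k + K_iᵀ d_k)ᵀ ⪯ P_i. Then for every t ∈ ℕ with t_i ≤ t < t_{i+1} and every k ∈ {1,…,r}, the state and input satisfy c_kᵀ x_t + d_kᵀ (K_i x_t) ≤ 1. -/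
open Matrix

/-!
Let `V x = xᵀ P x`, `F = A + B K` and `v = c + Kᵀ d`, so that the mixed constraint reads
`v ⬝ᵥ x ≤ 1`. Condition (c) says `ρ (v ⬝ᵥ x)² ≤ V x`; in particular `V ≥ 0`, and (a) gives
`V (F x) ≤ λ V x ≤ V x`. Hence the sublevel set `V ≤ ρ`, entered at the start of a cycle by (b),
is never left during that cycle, and on it (c) gives `ρ (v ⬝ᵥ x)² ≤ ρ`, i.e. `|v ⬝ᵥ x| ≤ 1`.
-/

theorem mem_of_mapsTo_of_forall_succ_eq {α : Type*} {f : α → α} {s : Set α}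
    (hf : Set.MapsTo f s s) {x : ℕ → α} {a b : ℕ}
    (hx : ∀ t, a ≤ t → t < b → x (t + 1) = f (x t)) (ha : x a ∈ s)
    {t : ℕ} (hat : a ≤ t) (htb : t ≤ b) : x t ∈ s := by
  induction t, hat using Nat.le_induction with
  | base => exact ha
  | succ t hat ih =>
    rw [hx t hat htb]
    exact hf (ih (Nat.le_of_succ_le htb))

/-- The sublevel set `E_P^ρ = {x | xᵀ P x ≤ ρ}`, an ellipsoid when `P` is positive definite and
`ρ > 0`; `P` and `ρ` are arbitrary here. -/
def ellipsoid {n R : Type*} [Fintype n] [CommSemiring R] [LE R]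
    (P : Matrix n n R) (ρ : R) : Set (n → R) :=
  {x | x ⬝ᵥ P *ᵥ x ≤ ρ}

section QuadraticForm

variable {m n R : Type*} [Fintype m] [Fintype n]

section CommSemiring

variable [CommSemiring R]

theorem dotProduct_transpose_mul_mul_mulVec (P : Matrix m m R) (F : Matrix m n R) (x : n → R) :
    x ⬝ᵥ (Fᵀ * P * F) *ᵥ x = (F *ᵥ x) ⬝ᵥ P *ᵥ (F *ᵥ x) := by
  rw [← mulVec_mulVec, ← mulVec_mulVec, dotProduct_mulVec x, vecMul_transpose]

theorem dotProduct_vecMulVec_self_mulVec (v x : n → R) :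
    x ⬝ᵥ vecMulVec v v *ᵥ x = (v ⬝ᵥ x) ^ 2 := by
  rw [vecMulVec_mulVec, op_smul_eq_smul, dotProduct_smul, smul_eq_mul, dotProduct_comm x v, sq]

theorem dotProduct_add_dotProduct_mulVec (c : n → R) (d : m → R) (K : Matrix m n R) (x : n → R) :
    c ⬝ᵥ x + d ⬝ᵥ K *ᵥ x = (c + Kᵀ *ᵥ d) ⬝ᵥ x := by
  rw [add_dotProduct, dotProduct_mulVec, mulVec_transpose]

end CommSemiring

section PartialOrder

variable [CommRing R] [PartialOrder R] [IsOrderedAddMonoid R] [StarRing R] [TrivialStar R]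

theorem dotProduct_mulVec_le_of_posSemidef_sub {M N : Matrix n n R} (h : (N - M).PosSemidef)
    (x : n → R) : x ⬝ᵥ M *ᵥ x ≤ x ⬝ᵥ N *ᵥ x := by
  simpa only [star_trivial, sub_mulVec, dotProduct_sub, sub_nonneg] using
    h.dotProduct_mulVec_nonneg x

theorem mul_sq_dotProduct_le_of_posSemidef_sub_smul_vecMulVec
    {P : Matrix n n R} {ρ : R} {v : n → R} (h : (P - ρ • vecMulVec v v).PosSemidef) (x : n → R) :
    ρ * (v ⬝ᵥ x) ^ 2 ≤ x ⬝ᵥ P *ᵥ x := by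
  simpa only [smul_mulVec, dotProduct_smul, smul_eq_mul, dotProduct_vecMulVec_self_mulVec] using
    dotProduct_mulVec_le_of_posSemidef_sub h x

theorem mapsTo_mulVec_ellipsoid [MulPosMono R] {P F : Matrix n n R} {lam : R}
    (hP : ∀ x, 0 ≤ x ⬝ᵥ P *ᵥ x) (hlam : lam ≤ 1) (h : (lam • P - Fᵀ * P * F).PosSemidef) (ρ : R) :
    Set.MapsTo (F *ᵥ ·) (ellipsoid P ρ) (ellipsoid P ρ) := fun x (hx : x ⬝ᵥ P *ᵥ x ≤ ρ) ↦
  calc (F *ᵥ x) ⬝ᵥ P *ᵥ (F *ᵥ x)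
      = x ⬝ᵥ (Fᵀ * P * F) *ᵥ x := (dotProduct_transpose_mul_mul_mulVec P F x).symm
    _ ≤ x ⬝ᵥ (lam • P) *ᵥ x := dotProduct_mulVec_le_of_posSemidef_sub h x
    _ = lam * (x ⬝ᵥ P *ᵥ x) := by rw [smul_mulVec, dotProduct_smul, smul_eq_mul]
    _ ≤ x ⬝ᵥ P *ᵥ x := mul_le_of_le_one_left (hP x) hlam
    _ ≤ ρ := hx

end PartialOrder

section LinearOrder

variable [CommRing R] [LinearOrder R] [IsStrictOrderedRing R] [StarRing R] [TrivialStar R]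

theorem dotProduct_mulVec_nonneg_of_posSemidef_sub_smul_vecMulVec
    {P : Matrix n n R} {ρ : R} {v : n → R} (hρ : 0 ≤ ρ)
    (h : (P - ρ • vecMulVec v v).PosSemidef) (x : n → R) : 0 ≤ x ⬝ᵥ P *ᵥ x :=
  (mul_nonneg hρ (sq_nonneg (v ⬝ᵥ x))).trans
    (mul_sq_dotProduct_le_of_posSemidef_sub_smul_vecMulVec h x)

theorem abs_dotProduct_le_one_of_mem_ellipsoid {P : Matrix n n R} {ρ : R} {v x : n → R}
    (hρ : 0 < ρ) (h : (P - ρ • vecMulVec v v).PosSemidef) (hx : x ∈ ellipsoid P ρ) :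
    |v ⬝ᵥ x| ≤ 1 := by
  have hmul : ρ * (v ⬝ᵥ x) ^ 2 ≤ ρ :=
    (mul_sq_dotProduct_le_of_posSemidef_sub_smul_vecMulVec h x).trans hx
  rw [← sq_le_one_iff_abs_le_one]
  exact (mul_le_iff_le_one_right hρ).mp hmul

theorem constrained_adp_constraint_satisfaction_general {A : Matrix n n R} {B : Matrix n m R}
    {K : Matrix m n R} {P : Matrix n n R} {lam ρ : R} {c : n → R} {d : m → R}
    {x : ℕ → n → R} {s e : ℕ} (hlam : lam ≤ 1) (hρ : 0 < ρ)
    (hdyn : ∀ t, s ≤ t → t < e → x (t + 1) = (A + B * K) *ᵥ x t)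
    (ha : (lam • P - (A + B * K)ᵀ * P * (A + B * K)).PosSemidef)
    (hb : x s ⬝ᵥ P *ᵥ x s ≤ ρ)
    (hc : (P - ρ • vecMulVec (c + Kᵀ *ᵥ d) (c + Kᵀ *ᵥ d)).PosSemidef)
    {t : ℕ} (hst : s ≤ t) (hte : t ≤ e) :
    c ⬝ᵥ x t + d ⬝ᵥ K *ᵥ x t ≤ 1 := by
  have hP : ∀ y, 0 ≤ y ⬝ᵥ P *ᵥ y :=
    dotProduct_mulVec_nonneg_of_posSemidef_sub_smul_vecMulVec hρ.le hc
  have hxt : x t ∈ ellipsoid P ρ :=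
    mem_of_mapsTo_of_forall_succ_eq (mapsTo_mulVec_ellipsoid hP hlam ha ρ) hdyn hb hst hte
  rw [dotProduct_add_dotProduct_mulVec]
  exact (le_abs_self _).trans (abs_dotProduct_le_one_of_mem_ellipsoid hρ hc hxt)

end LinearOrder

end QuadraticForm

/-- Theorem 1(i), constraint satisfaction: under the SDP conditions
(a) `(A+BK_i)ᵀ P_i (A+BK_i) ⪯ λ P_i`, (b) `x_{t_i}ᵀ P_i x_{t_i} ≤ ρ_i`, and
(c) `ρ_i (c_k + K_iᵀ d_k)(c_k + K_iᵀ d_k)ᵀ ⪯ P_i` for every learning cycle `i`,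
the closed-loop trajectory `x_{t+1} = (A + B K_i) x_t` on `[t_i, t_{i+1})` satisfies the
mixed state-input constraints `c_kᵀ x_t + d_kᵀ (K_i x_t) ≤ 1` throughout. -/
theorem constrained_adp_constraint_satisfaction {n m r : ℕ}
    (A : Matrix (Fin n) (Fin n) ℝ) (B : Matrix (Fin n) (Fin m) ℝ)
    (lam : ℝ) (hlam0 : 0 < lam) (hlam1 : lam ≤ 1)
    (c : Fin r → Fin n → ℝ) (d : Fin r → Fin m → ℝ)
    (ti : ℕ → ℕ) (hti : StrictMono ti) (hti0 : ti 0 = 0)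
    (K : ℕ → Matrix (Fin m) (Fin n) ℝ)
    (P : ℕ → Matrix (Fin n) (Fin n) ℝ) (hP : ∀ i : ℕ, (P i).PosDef)
    (ρ : ℕ → ℝ) (hρ : ∀ i : ℕ, 0 < ρ i)
    (x : ℕ → Fin n → ℝ)
    (hdyn : ∀ i t : ℕ, ti i ≤ t → t < ti (i + 1) →
      x (t + 1) = (A + B * K i).mulVec (x t))
    (ha : ∀ i : ℕ,
      (lam • P i - (A + B * K i)ᵀ * P i * (A + B * K i)).PosSemidef)
    (hb : ∀ i : ℕ, x (ti i) ⬝ᵥ (P i).mulVec (x (ti i)) ≤ ρ i)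
    (hc : ∀ (i : ℕ) (k : Fin r),
      (P i - ρ i • vecMulVec (c k + (K i)ᵀ.mulVec (d k))
        (c k + (K i)ᵀ.mulVec (d k))).PosSemidef) :
    ∀ i t : ℕ, ti i ≤ t → t < ti (i + 1) → ∀ k : Fin r,
      c k ⬝ᵥ x t + d k ⬝ᵥ (K i).mulVec (x t) ≤ 1 :=
  fun i _ hit hti' k ↦
    constrained_adp_constraint_satisfaction_general hlam1 (hρ i) (hdyn i) (ha i) (hb i) (hc i k)
      hit hti'.le
end

section
/- (Theorem 1(ii), asymptotic stability.) Let A ∈ ℝ^{n×n}, B ∈ ℝ^{n×m}, let α₁, α₂ be reals with 0 < α₁ ≤ α₂, let N ≥ 1 be a natural number, and let 0 < λ < (α₁/α₂)^{2/N}. Let (t_i)_{i∈ℕ} be a strictly increasing sequence of natural numbers with t_0 = 0 and t_{i+1} − t_i ≥ N for all i, and for each i let K_i ∈ ℝ^{m×n} and let P_i be a symmetric n×n matrix with α₁ I ⪯ P_i ⪯ α₂ I and (A + B K_i)ᵀ P_i (A + B K_i) ⪯ λ P_i (Loewner order). Let (x_t) satisfy x_{t+1} = (A + B K_i) x_t for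 all t with t_i ≤ t < t_{i+1}. Then x_t → 0 as t → ∞. -/
open Matrix Filter

/-! The quadratic forms `Vᵢ(x) = ⟪Pᵢ x, x⟫` serve as multiple Lyapunov functions. Inside cycle `i`,
`Vᵢ` decays by the factor `lam` per step. Since `Vᵢ` lies between `α₁‖x‖²` and `α₂‖x‖²`, passing
from `‖x‖²` to `Vᵢ` and back costs a factor `α₂ / α₁` per cycle. Over a cycle of length at least
`N`, `‖x‖²` is thus multiplied by at most `α₂ / α₁ * lam ^ N`, which is less than `1` as soon as
`lam ^ N < α₁ / α₂`. -/

section Scalar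

theorem le_mul_pow_mul_of_lyapunov {α₁ α₂ lam : ℝ} (hα₁ : 0 < α₁) (hlam₀ : 0 ≤ lam) {v w : ℕ → ℝ}
    {a s : ℕ} (hlo : α₁ * w (a + s) ≤ v (a + s)) (hup : v a ≤ α₂ * w a)
    (hv : ∀ k < s, v (a + k + 1) ≤ lam * v (a + k)) :
    w (a + s) ≤ α₂ / α₁ * lam ^ s * w a := by
  have hdecay : v (a + s) ≤ lam ^ s * v a := le_geom (u := fun k ↦ v (a + k)) hlam₀ s hv
  rw [div_mul_eq_mul_div, div_mul_eq_mul_div, le_div_iff₀' hα₁]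
  calc α₁ * w (a + s) ≤ lam ^ s * v a := hlo.trans hdecay
    _ ≤ lam ^ s * (α₂ * w a) := by gcongr
    _ = α₂ * lam ^ s * w a := by ring

variable {τ : ℕ → ℕ} {w : ℕ → ℝ}

theorem tendsto_zero_of_le_mul_comp (hτ : StrictMono τ) (hw : ∀ t, 0 ≤ w t)
    (hlim : Tendsto (w ∘ τ) atTop (nhds 0)) {κ : ℝ}
    (hκ : ∀ i t, τ i ≤ t → t < τ (i + 1) → w t ≤ κ * w (τ i)) :
    Tendsto w atTop (nhds 0) := by
  refine tendsto_order.2 ⟨fun ε hε ↦ .of_forall fun t ↦ hε.trans_le (hw t), fun ε hε ↦ ?_⟩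
  have hlimκ : Tendsto (fun i ↦ κ * w (τ i)) atTop (nhds 0) := by
    simpa using hlim.const_mul κ
  obtain ⟨k, hk⟩ := eventually_atTop.1 (hlimκ.eventually_lt_const hε)
  filter_upwards [eventually_ge_atTop (τ k)] with t hkt
  have h0t : τ 0 < t + 1 := Nat.lt_succ_of_le ((hτ.monotone k.zero_le).trans hkt)
  obtain ⟨i, hit, hti⟩ := hτ.exists_between_of_tendsto_atTop hτ.tendsto_atTop h0t
  have hki : k ≤ i := Nat.le_of_lt_succ (hτ.lt_iff_lt.1 (hkt.trans_lt hti))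
  exact (hκ i t (Nat.le_of_lt_succ hit) hti).trans_lt (hk i hki)

theorem tendsto_zero_of_le_mul_pow_mul_of_dwell {κ lam : ℝ} (hκ : 0 ≤ κ) (hlam₀ : 0 ≤ lam)
    (hlam₁ : lam ≤ 1) {N : ℕ} (hrate : κ * lam ^ N < 1) (hτ : StrictMono τ)
    (hdwell : ∀ i, τ i + N ≤ τ (i + 1)) (hw : ∀ t, 0 ≤ w t)
    (hcycle : ∀ i s, τ i + s ≤ τ (i + 1) → w (τ i + s) ≤ κ * lam ^ s * w (τ i)) :
    Tendsto w atTop (nhds 0) := by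
  have hstep (i : ℕ) : w (τ (i + 1)) ≤ κ * lam ^ N * w (τ i) := by
    obtain ⟨s, hs⟩ := Nat.exists_eq_add_of_le (hτ.monotone (i.le_add_right 1))
    have hNs : N ≤ s := by have := hdwell i; omega
    calc w (τ (i + 1)) = w (τ i + s) := by rw [hs]
      _ ≤ κ * lam ^ s * w (τ i) := hcycle i s hs.ge
      _ ≤ κ * lam ^ N * w (τ i) := mul_le_mul_of_nonneg_right
        (mul_le_mul_of_nonneg_left (pow_le_pow_of_le_one hlam₀ hlam₁ hNs) hκ) (hw _)
  have hrate₀ : 0 ≤ κ * lam ^ N := by positivity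
  have hstarts : Tendsto (w ∘ τ) atTop (nhds 0) := by
    refine squeeze_zero (fun i ↦ hw _)
      (fun i ↦ le_geom (u := w ∘ τ) hrate₀ i fun k _ ↦ hstep k) ?_
    simpa using (tendsto_pow_atTop_nhds_zero_of_lt_one hrate₀ hrate).mul_const (w (τ 0))
  refine tendsto_zero_of_le_mul_comp hτ hw hstarts (κ := κ) fun i t hit hti ↦ ?_
  obtain ⟨s, rfl⟩ := Nat.exists_eq_add_of_le hit
  calc w (τ i + s) ≤ κ * lam ^ s * w (τ i) := hcycle i s hti.le
    _ ≤ κ * w (τ i) := mul_le_mul_of_nonneg_right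
      (mul_le_of_le_one_right hκ (pow_le_one₀ hlam₀ hlam₁)) (hw _)

theorem tendsto_zero_of_multiple_lyapunov {α₁ α₂ lam : ℝ} (hα₁ : 0 < α₁) (hα : α₁ ≤ α₂)
    (hlam₀ : 0 ≤ lam) {N : ℕ} (hlam : lam ^ N < α₁ / α₂) (hτ : ∀ i, τ i + N ≤ τ (i + 1))
    (hw : ∀ t, 0 ≤ w t) {V : ℕ → ℕ → ℝ} (hlo : ∀ i t, α₁ * w t ≤ V i t)
    (hup : ∀ i t, V i t ≤ α₂ * w t)
    (hV : ∀ i t, τ i ≤ t → t < τ (i + 1) → V i (t + 1) ≤ lam * V i t) :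
    Tendsto w atTop (nhds 0) := by
  have hα₂ : 0 < α₂ := hα₁.trans_le hα
  have hlamN : lam ^ N < 1 := hlam.trans_le ((div_le_one hα₂).2 hα)
  have hN : N ≠ 0 := by rintro rfl; simp at hlamN
  have hlam₁ : lam ≤ 1 := ((pow_lt_one_iff_of_nonneg hlam₀ hN).1 hlamN).le
  have hmono : StrictMono τ := strictMono_nat_of_lt_succ fun i ↦ by have := hτ i; omega
  have hrate : α₂ / α₁ * lam ^ N < 1 := by
    rwa [div_mul_eq_mul_div, div_lt_one hα₁, ← lt_div_iff₀' hα₂]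
  exact tendsto_zero_of_le_mul_pow_mul_of_dwell (by positivity) hlam₀ hlam₁ hrate hmono hτ hw
    fun i s hs ↦ le_mul_pow_mul_of_lyapunov hα₁ hlam₀ (hlo i _) (hup i _)
      fun k hk ↦ hV i (τ i + k) (Nat.le_add_right _ _) (by omega)

end Scalar

section QuadraticForm

variable {𝕜 E : Type*} [RCLike 𝕜] [NormedAddCommGroup E] [InnerProductSpace 𝕜 E]

theorem reApplyInnerSelf_le_reApplyInnerSelf {S T : E →L[𝕜] E} (hST : S ≤ T) (v : E) :
    S.reApplyInnerSelf v ≤ T.reApplyInnerSelf v := by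
  simpa [ContinuousLinearMap.reApplyInnerSelf_apply, inner_sub_left]
    using ContinuousLinearMap.IsPositive.re_inner_nonneg_left hST v

theorem reApplyInnerSelf_ofReal_smul (c : ℝ) (T : E →L[𝕜] E) (v : E) :
    ((c : 𝕜) • T).reApplyInnerSelf v = c * T.reApplyInnerSelf v := by
  simp [ContinuousLinearMap.reApplyInnerSelf_apply, inner_smul_left]

theorem reApplyInnerSelf_ofReal_smul_one (c : ℝ) (v : E) :
    ((c : 𝕜) • (1 : E →L[𝕜] E)).reApplyInnerSelf v = c * ‖v‖ ^ 2 := by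
  rw [reApplyInnerSelf_ofReal_smul, ContinuousLinearMap.reApplyInnerSelf_apply,
    one_apply_eq_self, inner_self_eq_norm_sq]

theorem reApplyInnerSelf_star_mul_mul [CompleteSpace E] (F T : E →L[𝕜] E) (v : E) :
    (star F * T * F).reApplyInnerSelf v = T.reApplyInnerSelf (F v) := by
  simp [ContinuousLinearMap.reApplyInnerSelf_apply, ContinuousLinearMap.star_eq_adjoint,
    ContinuousLinearMap.adjoint_inner_left]

theorem constrained_adp_asymptotic_stability_general [CompleteSpace E] {α₁ α₂ lam : ℝ}
    (hα₁ : 0 < α₁) (hα : α₁ ≤ α₂) (hlam₀ : 0 ≤ lam) {N : ℕ} (hlam : lam ^ N < α₁ / α₂)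
    {τ : ℕ → ℕ} (hτ : ∀ i, τ i + N ≤ τ (i + 1)) {F P : ℕ → E →L[𝕜] E}
    (hPlo : ∀ i, (α₁ : 𝕜) • 1 ≤ P i) (hPhi : ∀ i, P i ≤ (α₂ : 𝕜) • 1)
    (hcontr : ∀ i, star (F i) * P i * F i ≤ (lam : 𝕜) • P i) {x : ℕ → E}
    (hx : ∀ i t, τ i ≤ t → t < τ (i + 1) → x (t + 1) = F i (x t)) :
    Tendsto x atTop (nhds 0) := by
  have hsq : Tendsto (fun t ↦ ‖x t‖ ^ 2) atTop (nhds 0) := by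
    refine tendsto_zero_of_multiple_lyapunov (V := fun i t ↦ (P i).reApplyInnerSelf (x t))
      hα₁ hα hlam₀ hlam hτ (fun t ↦ sq_nonneg _) (fun i t ↦ ?_) (fun i t ↦ ?_)
      fun i t hit hti ↦ ?_
    · simpa only [reApplyInnerSelf_ofReal_smul_one]
        using reApplyInnerSelf_le_reApplyInnerSelf (hPlo i) (x t)
    · simpa only [reApplyInnerSelf_ofReal_smul_one]
        using reApplyInnerSelf_le_reApplyInnerSelf (hPhi i) (x t)
    · simpa only [reApplyInnerSelf_star_mul_mul, reApplyInnerSelf_ofReal_smul, hx i t hit hti]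
        using reApplyInnerSelf_le_reApplyInnerSelf (hcontr i) (x t)
  exact tendsto_zero_iff_norm_tendsto_zero.2 (by simpa using hsq.sqrt)

end QuadraticForm

open scoped ComplexOrder in
theorem toEuclideanCLM_le_toEuclideanCLM_iff {𝕜 ι : Type*} [RCLike 𝕜] [Fintype ι] [DecidableEq ι]
    {S T : Matrix ι ι 𝕜} :
    toEuclideanCLM (𝕜 := 𝕜) S ≤ toEuclideanCLM (𝕜 := 𝕜) T ↔ (T - S).PosSemidef := by
  rw [ContinuousLinearMap.le_def, ← map_sub, ← ContinuousLinearMap.isPositive_toLinearMap_iff,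
    coe_toEuclideanCLM_eq_toEuclideanLin, isPositive_toEuclideanLin_iff]

theorem pow_lt_rpow_of_lt_rpow_div_s7 {a r s : ℝ} (ha : 0 ≤ a) (hr : 0 ≤ r) {N : ℕ} (hN : N ≠ 0)
    (h : a < r ^ (s / N)) : a ^ N < r ^ s := by
  rwa [div_eq_mul_inv, Real.rpow_mul hr,
    Real.lt_rpow_inv_iff_of_pos ha (Real.rpow_nonneg hr s) (by positivity), Real.rpow_natCast] at h

/-- Theorem 1(ii), asymptotic stability: with learning cycles of length at
least `N`, conditioning bounds `α₁ I ⪯ P_i ⪯ α₂ I`, contraction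
`(A+BK_i)ᵀ P_i (A+BK_i) ⪯ λ P_i`, and `0 < λ < (α₁/α₂)^(2/N)`, the closed-loop
trajectory `x_{t+1} = (A + B K_i) x_t` on `[t_i, t_{i+1})` converges to `0`. -/
theorem constrained_adp_asymptotic_stability {n m : ℕ}
    (A : Matrix (Fin n) (Fin n) ℝ) (B : Matrix (Fin n) (Fin m) ℝ)
    (α₁ α₂ : ℝ) (hα₁ : 0 < α₁) (hα : α₁ ≤ α₂)
    (N : ℕ) (hN : 1 ≤ N)
    (lam : ℝ) (hlam0 : 0 < lam) (hlam : lam < (α₁ / α₂) ^ ((2 : ℝ) / (N : ℝ)))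
    (ti : ℕ → ℕ) (hti : StrictMono ti) (hti0 : ti 0 = 0)
    (htiN : ∀ i : ℕ, N ≤ ti (i + 1) - ti i)
    (K : ℕ → Matrix (Fin m) (Fin n) ℝ)
    (P : ℕ → Matrix (Fin n) (Fin n) ℝ) (hPsym : ∀ i : ℕ, (P i).IsHermitian)
    (hPlo : ∀ i : ℕ, (P i - α₁ • (1 : Matrix (Fin n) (Fin n) ℝ)).PosSemidef)
    (hPhi : ∀ i : ℕ, (α₂ • (1 : Matrix (Fin n) (Fin n) ℝ) - P i).PosSemidef)
    (hcontr : ∀ i : ℕ,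
      (lam • P i - (A + B * K i)ᵀ * P i * (A + B * K i)).PosSemidef)
    (x : ℕ → EuclideanSpace ℝ (Fin n))
    (hdyn : ∀ i t : ℕ, ti i ≤ t → t < ti (i + 1) →
      x (t + 1) = (A + B * K i).mulVec (x t)) :
    Tendsto x atTop (nhds 0) := by
  have hratio₀ : 0 ≤ α₁ / α₂ := div_nonneg hα₁.le (hα₁.le.trans hα)
  have hratio₁ : α₁ / α₂ ≤ 1 := div_le_one_of_le₀ hα (hα₁.le.trans hα)
  have hlamN : lam ^ N < α₁ / α₂ :=
    (pow_lt_rpow_of_lt_rpow_div_s7 hlam0.le hratio₀ (by omega) hlam).trans_le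
      (Real.rpow_le_self_of_le_one hratio₀ hratio₁ one_le_two)
  refine constrained_adp_asymptotic_stability_general (𝕜 := ℝ) hα₁ hα hlam0.le hlamN
    (F := fun i ↦ toEuclideanCLM (𝕜 := ℝ) (A + B * K i))
    (P := fun i ↦ toEuclideanCLM (𝕜 := ℝ) (P i))
    (fun i ↦ by have := htiN i; omega) (fun i ↦ ?_) (fun i ↦ ?_) (fun i ↦ ?_)
    fun i t hit hti ↦ WithLp.ofLp_injective 2 (hdyn i t hit hti)
  · simpa only [map_smul, map_one, RCLike.ofReal_real_eq_id, id_eq]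
      using toEuclideanCLM_le_toEuclideanCLM_iff.2 (hPlo i)
  · simpa only [map_smul, map_one, RCLike.ofReal_real_eq_id, id_eq]
      using toEuclideanCLM_le_toEuclideanCLM_iff.2 (hPhi i)
  · simpa only [map_smul, map_mul, ← conjTranspose_eq_transpose_of_trivial,
      ← star_eq_conjTranspose, map_star, RCLike.ofReal_real_eq_id, id_eq]
      using toEuclideanCLM_le_toEuclideanCLM_iff.2 (hcontr i)
end

section
/- Let A, P, Q be real n×n matrices, B ∈ ℝ^{n×m}, R a real m×m matrix, with P symmetric positive semidefinite and R symmetric positive definite, and let K* = −(R + BᵀPB)⁻¹ BᵀPA. Then for every K ∈ ℝ^{m×n}, Q + K*ᵀRK* + (A + BK*)ᵀP(A + BK*) ⪯ Q + KᵀRK + (A + BK)ᵀP(A + BK) in the Loewner order; i.e., K* minimizes the matrix-valued one-step cost K ↦ Q + KᵀRK + (A + BK)ᵀP(A + BK) over all linear gains, and hence minimizes xᵀ(Q + KᵀRK + (A+BK)ᵀP(A+BK))x simultaneously for every x ∈ ℝⁿ. -/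
open Matrix

/-!
The cost is quadratic in the gain, with Hessian `S = R + BᴴPB`. Expanding around a gain `L` gives
`cost K - cost L = (K - L)ᴴ S (K - L)` plus cross terms in the gradient `S L + BᴴPA`. The gradient
vanishes at `K* = -S⁻¹BᴴPA`, leaving a congruence of the positive semidefinite matrix `S`.
-/

section OneStepCost

variable {ι κ α : Type*} [Fintype ι] [Fintype κ] [NonUnitalRing α] [StarRing α]

/-- The matrix of the quadratic form `x ↦ xᴴQx + uᴴRu + yᴴPy` with control `u = Kx` and next state
`y = Ax + Bu`: the cost of one step under the linear gain `K`, where `P` is the current value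
function. -/
def oneStepCost (A P Q : Matrix ι ι α) (B : Matrix ι κ α) (R : Matrix κ κ α)
    (K : Matrix κ ι α) : Matrix ι ι α :=
  Q + Kᴴ * R * K + (A + B * K)ᴴ * P * (A + B * K)

variable {A P : Matrix ι ι α} {B : Matrix ι κ α} {R : Matrix κ κ α}

theorem oneStepCost_sub_oneStepCost (Q : Matrix ι ι α) (hP : P.IsHermitian) (hR : R.IsHermitian)
    (K L : Matrix κ ι α) :
    oneStepCost A P Q B R K - oneStepCost A P Q B R L =
      (K - L)ᴴ * (R + Bᴴ * P * B) * (K - L) +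
        ((K - L)ᴴ * ((R + Bᴴ * P * B) * L + Bᴴ * P * A) +
          ((R + Bᴴ * P * B) * L + Bᴴ * P * A)ᴴ * (K - L)) := by
  simp only [oneStepCost, conjTranspose_add, conjTranspose_sub, conjTranspose_mul,
    conjTranspose_conjTranspose, hP.eq, hR.eq, Matrix.mul_add, Matrix.add_mul, Matrix.mul_sub,
    Matrix.sub_mul, Matrix.mul_assoc]
  abel

theorem oneStepCost_sub_oneStepCost_of_mul_eq_neg (Q : Matrix ι ι α) (hP : P.IsHermitian)
    (hR : R.IsHermitian) {L : Matrix κ ι α} (hL : (R + Bᴴ * P * B) * L = -(Bᴴ * P * A))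
    (K : Matrix κ ι α) :
    oneStepCost A P Q B R K - oneStepCost A P Q B R L =
      (K - L)ᴴ * (R + Bᴴ * P * B) * (K - L) := by
  have gradient_eq_zero : (R + Bᴴ * P * B) * L + Bᴴ * P * A = 0 := by rw [hL, neg_add_cancel]
  rw [oneStepCost_sub_oneStepCost Q hP hR, gradient_eq_zero, conjTranspose_zero, Matrix.mul_zero,
    Matrix.zero_mul, add_zero, add_zero]

end OneStepCost

theorem dotProduct_mulVec_le_of_posSemidef_sub_s11 {ι α : Type*} [Fintype ι] [Ring α] [PartialOrder α]
    [StarRing α] [AddRightMono α] {M N : Matrix ι ι α} (h : (N - M).PosSemidef) (x : ι → α) :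
    star x ⬝ᵥ M *ᵥ x ≤ star x ⬝ᵥ N *ᵥ x := by
  rw [← sub_nonneg, ← dotProduct_sub, ← sub_mulVec]
  exact h.dotProduct_mulVec_nonneg x

theorem policy_improvement_optimality_general {ι κ α : Type*} [Fintype ι] [Fintype κ] [Ring α]
    [PartialOrder α] [StarRing α] [AddRightMono α] {A P : Matrix ι ι α} (Q : Matrix ι ι α)
    {B : Matrix ι κ α} {R : Matrix κ κ α} (hP : P.IsHermitian) (hR : R.IsHermitian)
    (hS : (R + Bᴴ * P * B).PosSemidef) {Kstar : Matrix κ ι α}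
    (hKstar : (R + Bᴴ * P * B) * Kstar = -(Bᴴ * P * A)) (K : Matrix κ ι α) :
    (oneStepCost A P Q B R K - oneStepCost A P Q B R Kstar).PosSemidef ∧
      ∀ x : ι → α, star x ⬝ᵥ oneStepCost A P Q B R Kstar *ᵥ x ≤
        star x ⬝ᵥ oneStepCost A P Q B R K *ᵥ x := by
  have posSemidef_sub : (oneStepCost A P Q B R K - oneStepCost A P Q B R Kstar).PosSemidef := by
    rw [oneStepCost_sub_oneStepCost_of_mul_eq_neg Q hP hR hKstar]
    exact hS.conjTranspose_mul_mul_same (K - Kstar)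
  exact ⟨posSemidef_sub, dotProduct_mulVec_le_of_posSemidef_sub_s11 posSemidef_sub⟩

/-- with `P` symmetric PSD, `R` symmetric positive definite, and
`K* = −(R + BᵀPB)⁻¹ BᵀPA`, the gain `K*` minimizes the matrix-valued one-step cost
`K ↦ Q + KᵀRK + (A+BK)ᵀP(A+BK)` in the Loewner order, and hence minimizes
`xᵀ(Q + KᵀRK + (A+BK)ᵀP(A+BK))x` simultaneously for every `x`. -/
theorem policy_improvement_optimality {n m : ℕ}
    (A P Q : Matrix (Fin n) (Fin n) ℝ) (B : Matrix (Fin n) (Fin m) ℝ)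
    (R : Matrix (Fin m) (Fin m) ℝ)
    (hP : P.PosSemidef) (hR : R.PosDef)
    (Kstar : Matrix (Fin m) (Fin n) ℝ)
    (hKstar : Kstar = -((R + Bᵀ * P * B)⁻¹ * Bᵀ * P * A)) :
    ∀ K : Matrix (Fin m) (Fin n) ℝ,
      ((Q + Kᵀ * R * K + (A + B * K)ᵀ * P * (A + B * K)) -
        (Q + Kstarᵀ * R * Kstar +
          (A + B * Kstar)ᵀ * P * (A + B * Kstar))).PosSemidef ∧
      ∀ x : Fin n → ℝ,
        x ⬝ᵥ (Q + Kstarᵀ * R * Kstar +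
            (A + B * Kstar)ᵀ * P * (A + B * Kstar)).mulVec x ≤
          x ⬝ᵥ (Q + Kᵀ * R * K + (A + B * K)ᵀ * P * (A + B * K)).mulVec x := by
  have hS : (R + Bᴴ * P * B).PosDef := hR.add_posSemidef (hP.conjTranspose_mul_mul_same B)
  have normal_equation : (R + Bᴴ * P * B) * Kstar = -(Bᴴ * P * A) := by
    rw [hKstar, ← conjTranspose_eq_transpose_of_trivial, Matrix.mul_assoc _ _ P,
      Matrix.mul_assoc _ _ A, Matrix.mul_neg,
      mul_nonsing_inv_cancel_left _ _ ((isUnit_iff_isUnit_det _).mp hS.isUnit)]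
  intro K
  simpa only [oneStepCost, conjTranspose_eq_transpose_of_trivial, star_trivial] using
    policy_improvement_optimality_general Q hP.isHermitian hR.isHermitian hS.posSemidef
      normal_equation K
end

section
/- Let A ∈ ℝ^{n×n}, B ∈ ℝ^{n×m}, let P be a symmetric positive semidefinite real n×n matrix, let λ ≥ 0, and let K₁, K₂ ∈ ℝ^{m×n} both satisfy the contraction constraint (A + BK_i)ᵀ P (A + BK_i) ⪯ λ P (Loewner order) for i = 1, 2. Then for every α ∈ [0,1], the convex combination K = αK₁ + (1−α)K₂ also satisfies (A + BK)ᵀ P (A + BK) ⪯ λ P. -/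
open Matrix

/-!
For positive semidefinite `P` the map `X ↦ Xᴴ P X` is convex in the Loewner order: when
`a + b = 1`, the convexity defect at `M, N` is exactly `ab (M - N)ᴴ P (M - N)`. The gains satisfying
the contraction constraint are the preimage of a sublevel set of this map under the affine map
`K ↦ A + B K`.
-/

section ConvexityDefect

variable {m n 𝕜 R : Type*} [Fintype m] [CommRing 𝕜] [StarRing 𝕜] [Ring R] [StarRing R]
  [Algebra 𝕜 R] [StarModule 𝕜 R]

theorem smul_add_smul_sub_conjTranspose_mul_mul {a b : 𝕜} (ha : IsSelfAdjoint a)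
    (hab : a + b = 1) (P : Matrix m m R) (M N : Matrix m n R) :
    a • (Mᴴ * P * M) + b • (Nᴴ * P * N) - (a • M + b • N)ᴴ * P * (a • M + b • N) =
      a • b • ((M - N)ᴴ * P * (M - N)) := by
  obtain rfl : b = 1 - a := eq_sub_of_add_eq' hab
  simp only [conjTranspose_add, conjTranspose_sub, conjTranspose_smul, star_sub, star_one,
    ha.star_eq, Matrix.mul_add, Matrix.add_mul, Matrix.mul_sub, Matrix.sub_mul, Matrix.mul_smul,
    Matrix.smul_mul]
  module

end ConvexityDefect

section LoewnerConvexity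

variable {l m n 𝕜 R : Type*} [Fintype l] [Fintype m] [Finite n]
  [CommRing 𝕜] [PartialOrder 𝕜] [StarRing 𝕜] [StarOrderedRing 𝕜]
  [Ring R] [PartialOrder R] [StarRing R]
  [Algebra 𝕜 R] [StarModule 𝕜 R] [PosSMulMono 𝕜 R]

theorem posSemidef_smul_add_smul_sub_conjTranspose_mul_mul {a b : 𝕜} (ha : 0 ≤ a) (hb : 0 ≤ b)
    (hab : a + b = 1) {P : Matrix m m R} (hP : P.PosSemidef) (M N : Matrix m n R) :
    (a • (Mᴴ * P * M) + b • (Nᴴ * P * N) -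
      (a • M + b • N)ᴴ * P * (a • M + b • N)).PosSemidef := by
  rw [smul_add_smul_sub_conjTranspose_mul_mul (.of_nonneg ha) hab]
  exact ((hP.conjTranspose_mul_mul_same (M - N)).smul hb).smul ha

theorem convex_setOf_posSemidef_sub_conjTranspose_mul_mul [AddLeftMono R] {P : Matrix m m R}
    (hP : P.PosSemidef) (Q : Matrix n n R) :
    Convex 𝕜 {X : Matrix m n R | (Q - Xᴴ * P * X).PosSemidef} := by
  intro M hM N hN a b ha hb hab
  have defect_split : Q - (a • M + b • N)ᴴ * P * (a • M + b • N) =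
      a • (Q - Mᴴ * P * M) + b • (Q - Nᴴ * P * N) +
        (a • (Mᴴ * P * M) + b • (Nᴴ * P * N) - (a • M + b • N)ᴴ * P * (a • M + b • N)) := by
    rw [smul_sub, smul_sub, sub_add_sub_comm, Convex.combo_self hab, sub_add_sub_cancel]
  rw [Set.mem_ofPred_eq, defect_split]
  exact ((hM.smul ha).add (hN.smul hb)).add
    (posSemidef_smul_add_smul_sub_conjTranspose_mul_mul ha hb hab hP M N)

theorem convex_combination_preserves_contraction_general [AddLeftMono R]
    (A : Matrix m n R) (B : Matrix m l R) {P : Matrix m m R} (hP : P.PosSemidef)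
    (Q : Matrix n n R) :
    Convex 𝕜 {K : Matrix l n R | (Q - (A + B * K)ᴴ * P * (A + B * K)).PosSemidef} := by
  have convex_closedLoop : Convex 𝕜 {X : Matrix m n R | (Q - Xᴴ * P * X).PosSemidef} :=
    convex_setOf_posSemidef_sub_conjTranspose_mul_mul hP Q
  exact (convex_closedLoop.translate_preimage_right A).linear_preimage (mulLeftLinearMap n 𝕜 B)

end LoewnerConvexity

/-- if `K₁` and `K₂` both satisfy the contraction constraint
`(A + BK)ᵀ P (A + BK) ⪯ λ P` (with `P` symmetric PSD and `λ ≥ 0`), then so does every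
convex combination `K = αK₁ + (1−α)K₂` with `α ∈ [0,1]`. -/
theorem convex_combination_preserves_contraction {n m : ℕ}
    (A : Matrix (Fin n) (Fin n) ℝ) (B : Matrix (Fin n) (Fin m) ℝ)
    (P : Matrix (Fin n) (Fin n) ℝ) (hP : P.PosSemidef)
    (lam : ℝ) (hlam : 0 ≤ lam)
    (K₁ K₂ : Matrix (Fin m) (Fin n) ℝ)
    (h₁ : (lam • P - (A + B * K₁)ᵀ * P * (A + B * K₁)).PosSemidef)
    (h₂ : (lam • P - (A + B * K₂)ᵀ * P * (A + B * K₂)).PosSemidef) :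
    ∀ α : ℝ, 0 ≤ α → α ≤ 1 →
      (lam • P - (A + B * (α • K₁ + (1 - α) • K₂))ᵀ * P *
        (A + B * (α • K₁ + (1 - α) • K₂))).PosSemidef := by
  simp only [← conjTranspose_eq_transpose_of_trivial] at h₁ h₂ ⊢
  exact fun α hα₀ hα₁ ↦ convex_combination_preserves_contraction_general A B hP (lam • P) h₁ h₂
    hα₀ (sub_nonneg.2 hα₁) (add_sub_cancel α 1)
end

section
/- Let A, Q be real n×n matrices, B ∈ ℝ^{n×m}, R a real m×m matrix, K ∈ ℝ^{m×n}, and let P be a symmetric positive definite real n×n matrix satisfying the Lyapunov equation (A + BK)ᵀ P (A + BK) = P − (Q + KᵀRK). Let λ be any real number with λ ≥ μ, where μ is the largest eigenvalue of I − P^{−1/2}(Q + KᵀRK)P^{−1/2}. Then (A + BK)ᵀ P (A + BK) ⪯ λ P in the Loewner order. -/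
open Matrix
open scoped MatrixOrder

/-!
For strictly positive `P`, the order isomorphisms `X ↦ P^{1/2} X P^{1/2}` and
`X ↦ P^{−1/2} X P^{−1/2}` are mutually inverse. The first sends `λ I` to `λ P`, and the second sends
`P − W` to `I − P^{−1/2} W P^{−1/2}`. Hence `P − W ⪯ λ P` iff `I − P^{−1/2} W P^{−1/2} ⪯ λ I`,
which is a bound on the spectrum; the Lyapunov equation says that `(A+BK)ᵀ P (A+BK)` is such a
`P − W`, with `W = Q + KᵀRK`.
-/

section ConjSqrt

open CFC Ring

variable {A : Type*} [PartialOrder A] [Ring A] [StarRing A] [TopologicalSpace A]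
  [StarOrderedRing A] [Algebra ℝ A] [ContinuousFunctionalCalculus ℝ A IsSelfAdjoint]
  [NonnegSpectrumClass ℝ A] [IsSemitopologicalRing A] [T2Space A]

lemma conjSqrt_ringInverse_le_iff {c : A} (hc : IsStrictlyPositive c) (a b : A) :
    conjSqrt c⁻¹ʳ a ≤ b ↔ a ≤ conjSqrt c b where
  mp h := by simpa only [conjSqrt_conjSqrt_ringInverse c a] using conjSqrt_le_conjSqrt (c := c) h
  mpr h := by
    simpa only [conjSqrt_ringInverse_conjSqrt c b] using conjSqrt_le_conjSqrt (c := c⁻¹ʳ) h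

lemma conjSqrt_algebraMap {c : A} (hc : 0 ≤ c) (r : ℝ) :
    conjSqrt c (algebraMap ℝ A r) = r • c := by
  rw [Algebra.algebraMap_eq_smul_one, map_smul, conjSqrt_one c]

lemma conjSqrt_ringInverse_self_sub {c : A} (hc : IsStrictlyPositive c) (w : A) :
    conjSqrt c⁻¹ʳ (c - w) = 1 - conjSqrt c⁻¹ʳ w := by
  rw [map_sub, conjSqrt_ringInverse_self c]

lemma self_sub_le_smul_iff_spectrum_le {c w : A} (hc : IsStrictlyPositive c)
    (hw : IsSelfAdjoint (1 - conjSqrt c⁻¹ʳ w)) (r : ℝ) :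
    c - w ≤ r • c ↔ ∀ x ∈ spectrum ℝ (1 - conjSqrt c⁻¹ʳ w), x ≤ r := by
  rw [← conjSqrt_algebraMap hc.nonneg, ← conjSqrt_ringInverse_le_iff hc,
    conjSqrt_ringInverse_self_sub hc, le_algebraMap_iff_spectrum_le]

end ConjSqrt

section Matrix

open Ring
open scoped ComplexOrder

variable {𝕜 ι : Type*} [RCLike 𝕜] [Fintype ι] [DecidableEq ι]

lemma forall_eigenvalues_le_iff_spectrum_le {M : Matrix ι ι 𝕜} (hM : M.IsHermitian) (r : ℝ) :
    (∀ i, hM.eigenvalues i ≤ r) ↔ ∀ x ∈ spectrum ℝ M, x ≤ r := by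
  rw [hM.spectrum_real_eq_range_eigenvalues, Set.forall_mem_range]

lemma inv_sqrt_mul_mul_inv_sqrt_eq_conjSqrt (P W : Matrix ι ι 𝕜) :
    (CFC.sqrt P)⁻¹ * W * (CFC.sqrt P)⁻¹ = CFC.conjSqrt P⁻¹ʳ W := by
  rw [CFC.conjSqrt_apply, CFC.sqrt_ringInverse, nonsing_inv_eq_ringInverse]

theorem lqr_feasible_for_contraction_general {P W : Matrix ι ι 𝕜} (hP : P.PosDef)
    (hH : (1 - (CFC.sqrt P)⁻¹ * W * (CFC.sqrt P)⁻¹).IsHermitian) (lam : ℝ) :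
    (lam • P - (P - W)).PosSemidef ↔ ∀ i, hH.eigenvalues i ≤ lam := by
  rw [forall_eigenvalues_le_iff_spectrum_le, ← Matrix.le_iff]
  rw [inv_sqrt_mul_mul_inv_sqrt_eq_conjSqrt] at hH ⊢
  exact self_sub_le_smul_iff_spectrum_le hP.isStrictlyPositive hH.isSelfAdjoint lam

end Matrix

/-- if `P` (symmetric positive definite) satisfies the Lyapunov equation
`(A+BK)ᵀ P (A+BK) = P − (Q + KᵀRK)` and `λ ≥ μ`, where `μ` is the largest eigenvalue of
`I − P^{−1/2}(Q + KᵀRK)P^{−1/2}`, then `(A+BK)ᵀ P (A+BK) ⪯ λ P` (Loewner order). -/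
theorem lqr_feasible_for_contraction {n m : ℕ}
    (A Q : Matrix (Fin n) (Fin n) ℝ) (B : Matrix (Fin n) (Fin m) ℝ)
    (R : Matrix (Fin m) (Fin m) ℝ) (K : Matrix (Fin m) (Fin n) ℝ)
    (P : Matrix (Fin n) (Fin n) ℝ) (hP : P.PosDef)
    (hLyap : (A + B * K)ᵀ * P * (A + B * K) = P - (Q + Kᵀ * R * K))
    (hH : ((1 : Matrix (Fin n) (Fin n) ℝ) -
      (CFC.sqrt P)⁻¹ * (Q + Kᵀ * R * K) * (CFC.sqrt P)⁻¹).IsHermitian)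
    (lam : ℝ) (hlam : (⨆ i : Fin n, hH.eigenvalues i) ≤ lam) :
    (lam • P - (A + B * K)ᵀ * P * (A + B * K)).PosSemidef := by
  rw [hLyap, lqr_feasible_for_contraction_general hP hH]
  exact fun i ↦ (Finite.le_ciSup hH.eigenvalues i).trans hlam
end
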